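/- Let m ≥ 2 be an integer with m ≡ 5 (mod 6), let f(x) = x^m on ℤ_3, and let t = ν_3(m + 1). For each integer l ≥ 0, each a ∈ {0, 1, …, 3^(t−1) − 1}, and each sign ε ∈ {1, −1}, let x₀ = ε + 3^(l+1) + 3^(l+2)·a (a 3-adic unit, with inverse x₀⁻¹ in ℤ_3) and set M_{l,a,ε} = (x₀ + 3^(t+l+1)ℤ_3) ∪ (x₀⁻¹ + 3^(t+l+1)ℤ_3). Then the sets M_{l,a,ε} are pairwise disjoint clopen subsets of ℤ_3, each M_{l,a,ε} is a minimal component of f (f(M_{l,a,ε}) ⊆ M_{l,a,ε} and every forward orbit of f in M_{l,a,ε} is dense in M_{l,a,ε}), and the union of all the M_{l,a,ε} together with the fixed-point set {1, −1} equals the set of 3-adic units ℤ_3 \ 3ℤ_3. -/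

import Mathlib

open Filter Topology

/-!
For an odd prime `p`, lifting the exponent says `‖x ^ n - y ^ n‖ = ‖n‖ * ‖x - y‖` on `ℤ_[p]` as soon
as `y` is a unit and `x` is close to `y`. So if `x` is close to a root of unity `ε`, then
`‖x ^ i - x ^ j‖ = ‖i - j‖ * ‖x - ε‖` whenever `ε ^ i = ε ^ j`. Suppose `p ∣ m + 1` and
`ε ^ (m + 1) = 1`. Applied first to `x`, then to the exponents `(m ^ 2) ^ i`, the formula shows that
`i ↦ x ^ (m ^ 2) ^ i` scales `p`-adic distances by the constant `R = ‖(m + 1) * (x - ε)‖`.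
A map `ℕ → ℤ_[p]` that preserves `p`-adic distances is injective, hence onto, on residues modulo
every `p ^ k`, so its image is dense. Thus the even part of the orbit of `x` is dense in the ball of
radius `R` about `x`. As `‖x ^ m - x⁻¹‖ = R`, the odd part is dense in the ball of radius `R` about
`x⁻¹`, and the union of the two balls is a minimal component.

For `p = 3` every unit is congruent to exactly one `ε ∈ {1, -1}`, and every unit `z ≠ ± 1` has an
expansion `z = ε ± 3 ^ (l + 1) + ⋯` beginning with a single signed digit. Inversion flips the sign
of that digit, so each minimal component is found from a point whose leading digit is `1`.
-/

/-- `M` is a minimal component of the dynamical system `f`: a clopen invariant set in which every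
forward orbit is dense. -/
structure IsMinimalComponent {X : Type*} [TopologicalSpace X] (f : X → X) (M : Set X) : Prop where
  isClopen : IsClopen M
  mapsTo : Set.MapsTo f M M
  subset_closure_orbit : ∀ x ∈ M, M ⊆ closure (Set.range fun n : ℕ => f^[n] x)

namespace PadicMonomial

open Metric
open scoped Ring

variable {p : ℕ} [Fact p.Prime]

theorem norm_le_norm_iff_dvd {x y : ℤ_[p]} : ‖y‖ ≤ ‖x‖ ↔ x ∣ y := by
  constructor
  · intro h
    rcases eq_or_ne x 0 with rfl | hx
    · simpa using h
    · have hx' : (x : ℚ_[p]) ≠ 0 := PadicInt.coe_ne_zero.2 hx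
      refine ⟨⟨y / x, ?_⟩, PadicInt.ext ?_⟩
      · rw [norm_div]
        exact div_le_one_of_le₀ h (norm_nonneg _)
      · exact (mul_div_cancel₀ (y : ℚ_[p]) hx').symm
  · rintro ⟨c, rfl⟩
    rw [norm_mul]
    exact mul_le_of_le_one_right (norm_nonneg _) (PadicInt.norm_le_one c)

theorem norm_eq_one_iff_not_dvd {x : ℤ_[p]} : ‖x‖ = 1 ↔ ¬ (p : ℤ_[p]) ∣ x := by
  rw [← PadicInt.norm_lt_one_iff_dvd, not_lt, PadicInt.one_le_norm_iff]

theorem norm_eq_of_norm_sub_lt {x y : ℤ_[p]} (h : ‖x - y‖ < ‖y‖) : ‖x‖ = ‖y‖ := by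
  simpa using PadicInt.norm_eq_of_norm_add_lt_right (z1 := x) (z2 := -y)
    (by simpa [← sub_eq_add_neg] using h)

theorem norm_p_lt_one : ‖(p : ℤ_[p])‖ < 1 :=
  (PadicInt.norm_lt_one_iff_dvd _).2 dvd_rfl

theorem norm_natCast_eq_norm_pow_padicValNat {n : ℕ} (hn : n ≠ 0) :
    ‖(n : ℤ_[p])‖ = ‖(p : ℤ_[p]) ^ padicValNat p n‖ := by
  rw [PadicInt.norm_eq_zpow_neg_valuation (Nat.cast_ne_zero.2 hn), PadicInt.norm_p_pow,
    ← PadicInt.valuation_coe, PadicInt.coe_natCast, Padic.valuation_natCast]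

theorem norm_geom_sum₂_of_prime (hp : p ≠ 2) {x y : ℤ_[p]} (hy : ‖y‖ = 1) (hxy : ‖x - y‖ < 1)
    {q : ℕ} (hq : q.Prime) :
    ‖∑ i ∈ Finset.range q, x ^ i * y ^ (q - 1 - i)‖ = ‖(q : ℤ_[p])‖ := by
  have hdvd : (p : ℤ_[p]) ∣ x - y := (PadicInt.norm_lt_one_iff_dvd _).1 hxy
  have hx : ¬ (p : ℤ_[p]) ∣ x :=
    norm_eq_one_iff_not_dvd.1 ((norm_eq_of_norm_sub_lt (hy ▸ hxy)).trans hy)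
  rcases eq_or_ne q p with rfl | hqp
  · have hmult := emultiplicity_geom_sum₂_eq_one PadicInt.prime_p (hq.odd_of_ne_two hp) hdvd hx
    obtain ⟨⟨c, hc⟩, hp_sq⟩ := emultiplicity_eq_coe.1 (hmult.trans Nat.cast_one.symm)
    rw [pow_one] at hc
    have hc1 : ‖c‖ = 1 := norm_eq_one_iff_not_dvd.2 fun hqc =>
      hp_sq (by rw [hc, one_add_one_eq_two, pow_two]; exact mul_dvd_mul_left _ hqc)
    rw [hc, norm_mul, hc1, mul_one]
  · have hq1 : ‖(q : ℤ_[p])‖ = 1 := PadicInt.norm_natCast_eq_one_iff.2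
      ((Nat.coprime_primes Fact.out hq).2 hqp.symm)
    rw [hq1]
    exact norm_eq_one_iff_not_dvd.2
      (not_dvd_geom_sum₂ PadicInt.prime_p hdvd hx (norm_eq_one_iff_not_dvd.1 hq1))

theorem norm_pow_sub_pow (hp : p ≠ 2) {x y : ℤ_[p]} (hy : ‖y‖ = 1) (hxy : ‖x - y‖ < 1) (n : ℕ) :
    ‖x ^ n - y ^ n‖ = ‖(n : ℤ_[p])‖ * ‖x - y‖ := by
  induction n using induction_on_primes with
  | zero => simp
  | one => simp
  | prime_mul q n hq ih =>
    have hn : ‖x ^ n - y ^ n‖ < 1 :=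
      ih ▸ (mul_le_of_le_one_left (norm_nonneg _) (PadicInt.norm_le_one _)).trans_lt hxy
    rw [mul_comm q n, pow_mul, pow_mul, ← geom_sum₂_mul, norm_mul, ih,
      norm_geom_sum₂_of_prime hp (by rw [norm_pow, hy, one_pow]) hn hq]
    push_cast
    rw [norm_mul]
    ring

theorem eq_of_pow_eq_pow_of_dvd_sub (hp : p ≠ 2) {x y : ℤ_[p]} (hy : IsUnit y)
    (hxy : (p : ℤ_[p]) ∣ x - y) {n : ℕ} (hn : n ≠ 0) (h : x ^ n = y ^ n) : x = y := by
  have hnorm := norm_pow_sub_pow hp (PadicInt.isUnit_iff.1 hy)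
    ((PadicInt.norm_lt_one_iff_dvd _).2 hxy) n
  rw [h, sub_self, norm_zero, ← norm_mul, eq_comm, norm_eq_zero, mul_eq_zero, sub_eq_zero] at hnorm
  exact hnorm.resolve_left (Nat.cast_ne_zero.2 hn)

theorem norm_pow_sub_pow_of_pow_eq (hp : p ≠ 2) {x ε : ℤ_[p]} (hε : ‖ε‖ = 1)
    (hx : ‖x - ε‖ < 1) {i j : ℕ} (hij : ε ^ i = ε ^ j) :
    ‖x ^ i - x ^ j‖ = ‖(i : ℤ_[p]) - j‖ * ‖x - ε‖ := by
  wlog h : j ≤ i generalizing i j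
  · rw [norm_sub_rev (x ^ i), norm_sub_rev (i : ℤ_[p]), this hij.symm (le_of_not_ge h)]
  obtain ⟨k, rfl⟩ := Nat.exists_eq_add_of_le h
  have hεk : ε ^ k = 1 := by
    have hεj : ε ^ j ≠ 0 := pow_ne_zero _ (norm_ne_zero_iff.1 (hε ▸ one_ne_zero))
    simpa [pow_add, hεj] using hij
  have hx1 : ‖x‖ = 1 := (norm_eq_of_norm_sub_lt (hε ▸ hx)).trans hε
  calc ‖x ^ (j + k) - x ^ j‖ = ‖x ^ j * (x ^ k - ε ^ k)‖ := by rw [hεk]; congr 1; ring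
    _ = ‖(k : ℤ_[p])‖ * ‖x - ε‖ := by
      rw [norm_mul, norm_pow, hx1, one_pow, one_mul, norm_pow_sub_pow hp hε hx]
    _ = ‖((j + k : ℕ) : ℤ_[p]) - j‖ * ‖x - ε‖ := by push_cast; rw [add_sub_cancel_left]

theorem denseRange_of_norm_sub_eq {G : ℕ → ℤ_[p]}
    (hG : ∀ i j, ‖G i - G j‖ = ‖(i : ℤ_[p]) - j‖) : DenseRange G := by
  have hker (k : ℕ) (x y : ℤ_[p]) :
      PadicInt.toZModPow k x = PadicInt.toZModPow k y ↔ ‖x - y‖ ≤ (p : ℝ) ^ (-k : ℤ) := by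
    rw [PadicInt.norm_le_pow_iff_mem_span_pow, ← PadicInt.ker_toZModPow, RingHom.sub_mem_ker_iff]
  have hsurj (k : ℕ) :
      Function.Surjective fun c : ZMod (p ^ k) => PadicInt.toZModPow k (G c.val) := by
    refine Finite.surjective_of_injective fun a b hab => ?_
    have hval := (hker k a.val b.val).2 (hG a.val b.val ▸ (hker k _ _).1 hab)
    simpa using hval
  refine fun y => Metric.mem_closure_iff.2 fun δ hδ => ?_
  obtain ⟨k, hk⟩ := PadicInt.exists_pow_neg_lt p hδ
  obtain ⟨c, hc⟩ := hsurj k (PadicInt.toZModPow k y)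
  exact ⟨G c.val, Set.mem_range_self _, by
    rw [dist_comm, dist_eq_norm]; exact ((hker k _ _).1 hc).trans_lt hk⟩

theorem closedBall_subset_closure_range {F : ℕ → ℤ_[p]} {c : ℤ_[p]}
    (hF : ∀ i j, ‖F i - F j‖ = ‖(i : ℤ_[p]) - j‖ * ‖c‖) :
    closedBall (F 0) ‖c‖ ⊆ closure (Set.range F) := by
  rcases eq_or_ne c 0 with rfl | hc
  · simpa using subset_closure (Set.mem_range_self 0)
  have hdvd (i : ℕ) : c ∣ F i - F 0 := norm_le_norm_iff_dvd.1 <| by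
    rw [hF]; exact mul_le_of_le_one_left (norm_nonneg _) (PadicInt.norm_le_one _)
  choose G hG using hdvd
  have hdense : DenseRange G := denseRange_of_norm_sub_eq fun i j => by
    refine mul_right_cancel₀ (norm_ne_zero_iff.2 hc) ?_
    rw [← hF, ← norm_mul]
    congr 1
    linear_combination hG j - hG i
  have hFG : F = (fun z => F 0 + c * z) ∘ G := funext fun i => by
    simp [← hG i]
  intro y hy
  rw [mem_closedBall, dist_eq_norm, norm_le_norm_iff_dvd] at hy
  obtain ⟨z, hz⟩ := hy
  have hcont : Continuous fun z => F 0 + c * z := by fun_prop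
  rw [hFG, Set.range_comp, ← sub_add_cancel y (F 0), hz, add_comm (c * z)]
  exact image_closure_subset_closure_image hcont (Set.mem_image_of_mem _ (hdense z))

/-- The balls of radius `r` about `x` and `x⁻¹`; for a unit `x` and suitable `r` they are
interchanged by `z ↦ z ^ m`. The inverse is taken in `ℤ_[p]`, so it is `0` when `x` is not a
unit. -/
def reciprocalBalls (x : ℤ_[p]) (r : ℝ) : Set ℤ_[p] :=
  closedBall x r ∪ closedBall x⁻¹ʳ r

theorem isUnit_of_norm_sub_lt_one {x y : ℤ_[p]} (hy : IsUnit y) (h : ‖x - y‖ < 1) : IsUnit x := by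
  rw [PadicInt.isUnit_iff] at hy ⊢
  exact (norm_eq_of_norm_sub_lt (hy ▸ h)).trans hy

theorem norm_inverse_sub_inverse {x y : ℤ_[p]} (hx : IsUnit x) (hy : IsUnit y) :
    ‖x⁻¹ʳ - y⁻¹ʳ‖ = ‖x - y‖ := by
  rw [Ring.inverse_sub_inverse (iff_of_true hx hy), norm_mul, norm_mul,
    PadicInt.isUnit_iff.1 hx.ringInverse, PadicInt.isUnit_iff.1 hy.ringInverse, one_mul, mul_one,
    norm_sub_rev]

theorem reciprocalBalls_inverse {x : ℤ_[p]} (hx : IsUnit x) (r : ℝ) :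
    reciprocalBalls x⁻¹ʳ r = reciprocalBalls x r := by
  rw [reciprocalBalls, reciprocalBalls, Ring.inverse_inverse hx, Set.union_comm]

theorem reciprocalBalls_eq_of_mem {x z : ℤ_[p]} {r : ℝ} (hx : IsUnit x) (hr : r < 1)
    (hz : z ∈ reciprocalBalls x r) : reciprocalBalls z r = reciprocalBalls x r := by
  wlog h : z ∈ closedBall x r generalizing x
  · rw [← reciprocalBalls_inverse hx] at hz ⊢
    exact this hx.ringInverse hz (hz.resolve_right (by rwa [Ring.inverse_inverse hx]))
  have hzx : ‖z - x‖ ≤ r := by rwa [← dist_eq_norm]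
  have hzu : IsUnit z := isUnit_of_norm_sub_lt_one hx (hzx.trans_lt hr)
  have hinv : z⁻¹ʳ ∈ closedBall x⁻¹ʳ r := by
    rwa [mem_closedBall, dist_eq_norm, norm_inverse_sub_inverse hzu hx]
  rw [reciprocalBalls, reciprocalBalls, IsUltrametricDist.closedBall_eq_of_mem h,
    IsUltrametricDist.closedBall_eq_of_mem hinv]

theorem isClopen_reciprocalBalls (x : ℤ_[p]) {r : ℝ} (hr : r ≠ 0) :
    IsClopen (reciprocalBalls x r) :=
  (IsUltrametricDist.isClopen_closedBall _ hr).union (IsUltrametricDist.isClopen_closedBall _ hr)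

section Dynamics

variable {m : ℕ} {x ε : ℤ_[p]}

theorem norm_pow_sub_inverse (hp : p ≠ 2) (hε : ε ^ (m + 1) = 1) (hx : ‖x - ε‖ < 1) :
    ‖x ^ m - x⁻¹ʳ‖ = ‖((m + 1 : ℕ) : ℤ_[p]) * (x - ε)‖ := by
  have hεu : IsUnit ε := IsUnit.of_pow_eq_one hε m.succ_ne_zero
  have hxu : IsUnit x := isUnit_of_norm_sub_lt_one hεu hx
  have hx_mul : x * (x ^ m - x⁻¹ʳ) = x ^ (m + 1) - ε ^ (m + 1) := by
    rw [hε, mul_sub, Ring.mul_inverse_cancel _ hxu, pow_succ']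
  rw [norm_mul, ← norm_pow_sub_pow hp (PadicInt.isUnit_iff.1 hεu) hx, ← hx_mul, norm_mul,
    PadicInt.isUnit_iff.1 hxu, one_mul]

theorem norm_natCast_sq_sub_one (hp : p ≠ 2) (hm : p ∣ m + 1) :
    ‖(m : ℤ_[p]) ^ 2 - 1‖ = ‖((m + 1 : ℕ) : ℤ_[p])‖ := by
  have hneg_two : ‖(-2 : ℤ_[p])‖ = 1 := by
    rw [norm_neg]
    exact_mod_cast PadicInt.norm_natCast_eq_one_iff.2
      ((Nat.coprime_primes Fact.out Nat.prime_two).2 hp)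
  have hsub : (m : ℤ_[p]) - 1 - -2 = (m + 1 : ℕ) := by push_cast; ring
  have hm_pred : ‖(m : ℤ_[p]) - 1‖ = 1 := by
    rw [← hneg_two]
    refine norm_eq_of_norm_sub_lt ?_
    rw [hsub, hneg_two]
    exact PadicInt.norm_natCast_lt_one_iff.2 hm
  calc ‖(m : ℤ_[p]) ^ 2 - 1‖ = ‖((m + 1 : ℕ) : ℤ_[p]) * (m - 1)‖ := by
        congr 1; push_cast; ring
    _ = ‖((m + 1 : ℕ) : ℤ_[p])‖ := by rw [norm_mul, hm_pred, mul_one]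

theorem norm_sq_pow_sub_sq_pow (hp : p ≠ 2) (hm : p ∣ m + 1) (i j : ℕ) :
    ‖(((m ^ 2) ^ i : ℕ) : ℤ_[p]) - ((m ^ 2) ^ j : ℕ)‖ =
      ‖(i : ℤ_[p]) - j‖ * ‖((m + 1 : ℕ) : ℤ_[p])‖ := by
  have hlt : ‖(m : ℤ_[p]) ^ 2 - 1‖ < 1 := by
    rw [norm_natCast_sq_sub_one hp hm]
    exact PadicInt.norm_natCast_lt_one_iff.2 hm
  simp only [Nat.cast_pow]
  rw [norm_pow_sub_pow_of_pow_eq hp norm_one hlt (by simp), norm_natCast_sq_sub_one hp hm]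

theorem pow_sq_pow_eq_self {M : Type*} [Monoid M] {ε : M} {m : ℕ} (hε : ε ^ (m + 1) = 1) (i : ℕ) :
    ε ^ (m ^ 2) ^ i = ε := by
  have hsq : ε ^ m ^ 2 = ε := by
    calc ε ^ m ^ 2 = ε ^ m ^ 2 * ε ^ (m + 1) := by rw [hε, mul_one]
      _ = (ε ^ (m + 1)) ^ m * ε := by rw [← pow_add, ← pow_mul, ← pow_succ]; ring_nf
      _ = ε := by rw [hε, one_pow, one_mul]
  induction i with
  | zero => rw [pow_zero, pow_one]
  | succ i ih => rw [pow_succ, pow_mul, ih, hsq]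

theorem norm_orbit_sub_orbit (hp : p ≠ 2) (hm : p ∣ m + 1) (hε : ε ^ (m + 1) = 1)
    (hx : ‖x - ε‖ < 1) (i j : ℕ) :
    ‖x ^ (m ^ 2) ^ i - x ^ (m ^ 2) ^ j‖ =
      ‖(i : ℤ_[p]) - j‖ * ‖((m + 1 : ℕ) : ℤ_[p]) * (x - ε)‖ := by
  have hε1 : ‖ε‖ = 1 := PadicInt.isUnit_iff.1 (IsUnit.of_pow_eq_one hε m.succ_ne_zero)
  have hij : ε ^ (m ^ 2) ^ i = ε ^ (m ^ 2) ^ j := by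
    rw [pow_sq_pow_eq_self hε, pow_sq_pow_eq_self hε]
  rw [norm_pow_sub_pow_of_pow_eq hp hε1 hx hij, norm_sq_pow_sub_sq_pow hp hm, norm_mul, mul_assoc]

theorem closedBall_subset_closure_orbit (hp : p ≠ 2) (hm : p ∣ m + 1) (hε : ε ^ (m + 1) = 1)
    (hx : ‖x - ε‖ < 1) :
    closedBall x ‖((m + 1 : ℕ) : ℤ_[p]) * (x - ε)‖ ⊆
      closure (Set.range fun n : ℕ => x ^ m ^ n) := by
  have h := closedBall_subset_closure_range (norm_orbit_sub_orbit hp hm hε hx)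
  rw [pow_zero, pow_one] at h
  refine h.trans (closure_mono ?_)
  rintro _ ⟨n, rfl⟩
  exact ⟨2 * n, by simp only [pow_mul]⟩

theorem reciprocalBalls_subset_closure_orbit (hp : p ≠ 2) (hm : p ∣ m + 1) (hε : ε ^ (m + 1) = 1)
    (hx : ‖x - ε‖ < 1) :
    reciprocalBalls x ‖((m + 1 : ℕ) : ℤ_[p]) * (x - ε)‖ ⊆
      closure (Set.range fun n : ℕ => x ^ m ^ n) := by
  refine Set.union_subset (closedBall_subset_closure_orbit hp hm hε hx) ?_
  have hε1 : ‖ε‖ = 1 := PadicInt.isUnit_iff.1 (IsUnit.of_pow_eq_one hε m.succ_ne_zero)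
  have hm1 : ‖(m : ℤ_[p])‖ = 1 := PadicInt.norm_natCast_eq_one_iff.2
    (Nat.Coprime.of_dvd_left hm (by simp))
  have hdist : ‖x ^ m - ε ^ m‖ = ‖x - ε‖ := by rw [norm_pow_sub_pow hp hε1 hx, hm1, one_mul]
  have hball : x ^ m ∈ closedBall x⁻¹ʳ ‖((m + 1 : ℕ) : ℤ_[p]) * (x - ε)‖ := by
    rw [mem_closedBall, dist_eq_norm, norm_pow_sub_inverse hp hε hx]
  have h := closedBall_subset_closure_orbit (ε := ε ^ m) hp hm (by rw [pow_right_comm, hε, one_pow])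
    (hdist ▸ hx)
  rw [norm_mul, hdist, ← norm_mul, ← IsUltrametricDist.closedBall_eq_of_mem hball] at h
  refine h.trans (closure_mono ?_)
  rintro _ ⟨n, rfl⟩
  exact ⟨n + 1, by simp only [pow_succ', pow_mul]⟩

theorem exists_pow_succ_eq_one_of_mem_reciprocalBalls {z : ℤ_[p]} {r : ℝ} (hε : ε ^ (m + 1) = 1)
    (hx : ‖x - ε‖ < 1) (hr : r < ‖x - ε‖) (hz : z ∈ reciprocalBalls x r) :
    ∃ ε' : ℤ_[p], ε' ^ (m + 1) = 1 ∧ ‖z - ε'‖ = ‖x - ε‖ := by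
  wlog h : z ∈ closedBall x r generalizing x ε
  · have hεu : IsUnit ε := IsUnit.of_pow_eq_one hε m.succ_ne_zero
    have hxu : IsUnit x := isUnit_of_norm_sub_lt_one hεu hx
    rw [← norm_inverse_sub_inverse hxu hεu] at hx hr ⊢
    rw [← reciprocalBalls_inverse hxu] at hz
    refine this ?_ hx hr hz (hz.resolve_right ?_)
    · rw [Ring.inverse_pow, hε, Ring.inverse_one]
    · rwa [Ring.inverse_inverse hxu]
  have hzx : ‖(z - ε) - (x - ε)‖ < ‖x - ε‖ := by
    rw [sub_sub_sub_cancel_right, ← dist_eq_norm]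
    exact (mem_closedBall.1 h).trans_lt hr
  exact ⟨ε, hε, norm_eq_of_norm_sub_lt hzx⟩

theorem exists_reciprocalBalls_eq_of_mem {z : ℤ_[p]} (hm : p ∣ m + 1) (hε : ε ^ (m + 1) = 1)
    (hx : ‖x - ε‖ < 1) (hne : x ≠ ε)
    (hz : z ∈ reciprocalBalls x ‖((m + 1 : ℕ) : ℤ_[p]) * (x - ε)‖) :
    ∃ ε' : ℤ_[p], ε' ^ (m + 1) = 1 ∧ ‖z - ε'‖ < 1 ∧
      reciprocalBalls x ‖((m + 1 : ℕ) : ℤ_[p]) * (x - ε)‖ =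
        reciprocalBalls z ‖((m + 1 : ℕ) : ℤ_[p]) * (z - ε')‖ := by
  have hr : ‖((m + 1 : ℕ) : ℤ_[p]) * (x - ε)‖ < ‖x - ε‖ := by
    rw [norm_mul]
    exact mul_lt_of_lt_one_left (norm_pos_iff.2 (sub_ne_zero.2 hne))
      (PadicInt.norm_natCast_lt_one_iff.2 hm)
  have hxu : IsUnit x := isUnit_of_norm_sub_lt_one (IsUnit.of_pow_eq_one hε m.succ_ne_zero) hx
  obtain ⟨ε', hε', hzε'⟩ := exists_pow_succ_eq_one_of_mem_reciprocalBalls hε hx hr hz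
  refine ⟨ε', hε', hzε' ▸ hx, ?_⟩
  rw [← reciprocalBalls_eq_of_mem hxu (hr.trans hx) hz, norm_mul, norm_mul, hzε']

theorem isMinimalComponent_reciprocalBalls (hp : p ≠ 2) (hm : p ∣ m + 1) (hε : ε ^ (m + 1) = 1)
    (hx : ‖x - ε‖ < 1) (hne : x ≠ ε) :
    IsMinimalComponent (fun z : ℤ_[p] => z ^ m)
      (reciprocalBalls x ‖((m + 1 : ℕ) : ℤ_[p]) * (x - ε)‖) where
  isClopen := isClopen_reciprocalBalls _ <| norm_ne_zero_iff.2 <|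
    mul_ne_zero (Nat.cast_ne_zero.2 m.succ_ne_zero) (sub_ne_zero.2 hne)
  mapsTo z hz := by
    obtain ⟨ε', hε', hzε', hM⟩ := exists_reciprocalBalls_eq_of_mem hm hε hx hne hz
    rw [hM]
    right
    rw [mem_closedBall, dist_eq_norm, norm_pow_sub_inverse hp hε' hzε']
  subset_closure_orbit z hz := by
    obtain ⟨ε', hε', hzε', hM⟩ := exists_reciprocalBalls_eq_of_mem hm hε hx hne hz
    rw [hM]
    simp only [pow_iterate]
    exact reciprocalBalls_subset_closure_orbit hp hm hε' hzε'

end Dynamics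

section Components

theorem dvd_pow_sub_self (u : ℤ_[p]) : (p : ℤ_[p]) ∣ u ^ p - u := by
  rw [← PadicInt.norm_lt_one_iff_dvd, ← PadicInt.mem_nonunits, ← IsLocalRing.mem_maximalIdeal,
    ← PadicInt.ker_toZMod, RingHom.sub_mem_ker_iff, map_pow, ZMod.pow_card]

theorem exists_sq_eq_one_of_not_three_dvd {u : ℤ_[3]} (hu : ¬ (3 : ℤ_[3]) ∣ u) :
    ∃ δ : ℤ_[3], δ ^ 2 = 1 ∧ 3 ∣ u - δ := by
  have hprime : Prime (3 : ℤ_[3]) := mod_cast PadicInt.prime_p (p := 3)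
  have hdvd : (3 : ℤ_[3]) ∣ u * ((u - 1) * (u + 1)) := by
    have h := dvd_pow_sub_self u
    rwa [show u ^ 3 - u = u * ((u - 1) * (u + 1)) by ring] at h
  rcases hprime.dvd_or_dvd ((hprime.dvd_or_dvd hdvd).resolve_left hu) with h | h
  · exact ⟨1, one_pow 2, h⟩
  · exact ⟨-1, neg_one_sq, by rwa [sub_neg_eq_add]⟩

/-- `z = ε + δ p ^ (l + 1) + O(p ^ (l + 2))`: relative to `ε`, the expansion of `z` begins with the
digit `δ` in position `l + 1`. Only units `δ` are of interest; `δ = ± 1` when `p = 3`. -/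
def HasLeadingTerm (ε δ : ℤ_[p]) (l : ℕ) (z : ℤ_[p]) : Prop :=
  (p : ℤ_[p]) ^ (l + 2) ∣ z - (ε + δ * p ^ (l + 1))

namespace HasLeadingTerm

variable {ε ε' δ δ' z : ℤ_[p]} {l l' : ℕ}

theorem norm_sub (h : HasLeadingTerm ε δ l z) (hδ : IsUnit δ) :
    ‖z - ε‖ = ‖(p : ℤ_[p]) ^ (l + 1)‖ := by
  have hlead : ‖δ * p ^ (l + 1)‖ = ‖(p : ℤ_[p]) ^ (l + 1)‖ := by
    rw [norm_mul, PadicInt.isUnit_iff.1 hδ, one_mul]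
  rw [← hlead]
  refine norm_eq_of_norm_sub_lt ?_
  rw [hlead, sub_sub]
  refine (norm_le_norm_iff_dvd.2 h).trans_lt ?_
  rw [pow_succ _ (l + 1), norm_mul]
  exact mul_lt_of_lt_one_right (norm_pos_iff.2 (pow_ne_zero _ PadicInt.prime_p.ne_zero))
    norm_p_lt_one

theorem dvd_sub (h : HasLeadingTerm ε δ l z) : (p : ℤ_[p]) ∣ z - ε := by
  have hlead : (p : ℤ_[p]) ∣ δ * p ^ (l + 1) := (dvd_pow_self _ l.succ_ne_zero).mul_left _
  rw [← dvd_sub_left hlead, sub_sub]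
  exact (dvd_pow_self _ (l + 1).succ_ne_zero).trans h

theorem unique (hp : p ≠ 2) (hε : ε ^ 2 = 1) (hε' : ε' ^ 2 = 1) (hδ : δ ^ 2 = 1) (hδ' : δ' ^ 2 = 1)
    (h : HasLeadingTerm ε δ l z) (h' : HasLeadingTerm ε' δ' l' z) :
    ε = ε' ∧ δ = δ' ∧ l = l' := by
  have unit {u : ℤ_[p]} (hu : u ^ 2 = 1) : IsUnit u := IsUnit.of_pow_eq_one hu two_ne_zero
  have eq_of_dvd {u v : ℤ_[p]} (hu : u ^ 2 = 1) (hv : v ^ 2 = 1) (huv : (p : ℤ_[p]) ∣ u - v) :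
      u = v := eq_of_pow_eq_pow_of_dvd_sub hp (unit hv) huv two_ne_zero (hu.trans hv.symm)
  obtain rfl : ε = ε' := eq_of_dvd hε hε' (by simpa using h'.dvd_sub.sub h.dvd_sub)
  obtain rfl : l = l' := by
    have hnorm := (h.norm_sub (unit hδ)).symm.trans (h'.norm_sub (unit hδ'))
    rw [norm_pow, norm_pow] at hnorm
    exact Nat.succ_injective (pow_right_injective₀ (norm_pos_iff.2 PadicInt.prime_p.ne_zero)
      norm_p_lt_one.ne hnorm)
  refine ⟨rfl, eq_of_dvd hδ hδ' ?_, rfl⟩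
  have hdiff : (p : ℤ_[p]) ^ (l + 1) * p ∣ p ^ (l + 1) * (δ - δ') := by
    rw [← pow_succ]
    convert h'.sub h using 1
    ring
  exact (mul_dvd_mul_iff_left (pow_ne_zero _ PadicInt.prime_p.ne_zero)).1 hdiff

theorem isUnit (h : HasLeadingTerm ε δ l z) (hε : IsUnit ε) : IsUnit z :=
  isUnit_of_norm_sub_lt_one hε ((PadicInt.norm_lt_one_iff_dvd _).2 h.dvd_sub)

theorem inverse (h : HasLeadingTerm ε δ l z) (hε : ε ^ 2 = 1) :
    HasLeadingTerm ε (-δ) l z⁻¹ʳ := by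
  have hzu : IsUnit z := h.isUnit (.of_pow_eq_one hε two_ne_zero)
  obtain ⟨e, he⟩ := h
  have hzw : z * z⁻¹ʳ = 1 := Ring.mul_inverse_cancel _ hzu
  refine ⟨z⁻¹ʳ * (δ ^ 2 * p ^ l - (ε - δ * p ^ (l + 1)) * e), hzu.mul_left_cancel ?_⟩
  linear_combination (1 - p ^ (l + 2) * (δ ^ 2 * p ^ l - (ε - δ * p ^ (l + 1)) * e)) * hzw -
    (ε - δ * p ^ (l + 1)) * he - hε

theorem of_mem_closedBall {w : ℤ_[p]} {s : ℕ} (hz : HasLeadingTerm ε δ l z)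
    (hw : w ∈ closedBall z ‖(p : ℤ_[p]) ^ (s + l + 2)‖) : HasLeadingTerm ε δ l w := by
  rw [mem_closedBall, dist_eq_norm, norm_le_norm_iff_dvd] at hw
  simpa [HasLeadingTerm] using ((pow_dvd_pow _ (by omega)).trans hw).add hz

end HasLeadingTerm

theorem exists_hasLeadingTerm {z : ℤ_[3]} (hz : IsUnit z) (hz2 : z ^ 2 ≠ 1) :
    ∃ (ε δ : ℤ_[3]) (l : ℕ), ε ^ 2 = 1 ∧ δ ^ 2 = 1 ∧ HasLeadingTerm ε δ l z := by
  obtain ⟨ε, hε, hzε⟩ := exists_sq_eq_one_of_not_three_dvd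
    (norm_eq_one_iff_not_dvd.1 (PadicInt.isUnit_iff.1 hz))
  have hne : z - ε ≠ 0 := fun h => hz2 (by rw [sub_eq_zero.1 h, hε])
  obtain ⟨l, hl⟩ : ∃ l, (z - ε).valuation = l + 1 := by
    refine Nat.exists_eq_succ_of_ne_zero fun h0 => ?_
    have hnorm := PadicInt.norm_eq_zpow_neg_valuation hne
    rw [h0, Nat.cast_zero, neg_zero, zpow_zero] at hnorm
    exact norm_eq_one_iff_not_dvd.1 hnorm hzε
  have hzu := PadicInt.unitCoeff_spec hne
  rw [hl] at hzu
  obtain ⟨δ, hδ, huδ⟩ := exists_sq_eq_one_of_not_three_dvd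
    (norm_eq_one_iff_not_dvd.1 (PadicInt.norm_units (PadicInt.unitCoeff hne)))
  refine ⟨ε, δ, l, hε, hδ, ?_⟩
  have h := mul_dvd_mul_left (3 ^ (l + 1)) huδ
  rw [← pow_succ] at h
  rw [HasLeadingTerm]
  convert h using 1
  · norm_num
  · push_cast at hzu
    linear_combination hzu

/-- The point `x₀` of the paper; as `l` and `a` vary these are the natural representatives of the
points with leading digit `1` relative to `ε`. -/
noncomputable def basePoint (l a : ℕ) (ε : ℤ_[p]) : ℤ_[p] :=
  ε + p ^ (l + 1) + p ^ (l + 2) * a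

/-- The set `M_{l,a,ε}` of the paper for `t = s + 1`; the shift avoids truncated subtraction in the
range `a < p ^ (t - 1)`. -/
def component (s l a : ℕ) (ε : ℤ_[p]) : Set ℤ_[p] :=
  reciprocalBalls (basePoint l a ε) ‖(p : ℤ_[p]) ^ (s + l + 2)‖

variable {s l a l' a' : ℕ} {ε ε' z : ℤ_[p]}

theorem hasLeadingTerm_basePoint (l a : ℕ) (ε : ℤ_[p]) :
    HasLeadingTerm ε 1 l (basePoint l a ε) :=
  ⟨a, by rw [basePoint]; ring⟩

theorem isUnit_basePoint (hε : IsUnit ε) (l a : ℕ) : IsUnit (basePoint l a ε) :=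
  (hasLeadingTerm_basePoint l a ε).isUnit hε

theorem exists_mem_closedBall_basePoint (hz : HasLeadingTerm ε 1 l z) (s : ℕ) :
    ∃ a < p ^ s, z ∈ closedBall (basePoint l a ε) ‖(p : ℤ_[p]) ^ (s + l + 2)‖ := by
  obtain ⟨c, hc⟩ := hz
  refine ⟨c.appr s, c.appr_lt s, ?_⟩
  have hdigits : (p : ℤ_[p]) ^ s ∣ c - c.appr s := Ideal.mem_span_singleton.1 (c.appr_spec s)
  rw [mem_closedBall, dist_eq_norm, norm_le_norm_iff_dvd]
  convert mul_dvd_mul_left ((p : ℤ_[p]) ^ (l + 2)) hdigits using 1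
  · ring
  · rw [basePoint, mul_sub, ← hc]
    ring

theorem eq_of_basePoint_mem_closedBall (ha : a < p ^ s) (ha' : a' < p ^ s)
    (h : basePoint l a ε ∈ closedBall (basePoint l a' ε) ‖(p : ℤ_[p]) ^ (s + l + 2)‖) :
    a = a' := by
  rw [mem_closedBall, dist_eq_norm, norm_le_norm_iff_dvd] at h
  have hdvd : (p : ℤ_[p]) ^ s ∣ (((a : ℤ) - (a' : ℤ) : ℤ) : ℤ_[p]) := by
    refine (mul_dvd_mul_iff_left (pow_ne_zero (l + 2) PadicInt.prime_p.ne_zero)).1 ?_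
    convert h using 1
    · ring
    · rw [basePoint, basePoint]
      push_cast
      ring
  have hmod : a' ≡ a [MOD p ^ s] :=
    Nat.modEq_iff_dvd.2 (by rw [Nat.cast_pow]; exact (PadicInt.pow_p_dvd_int_iff _ _).1 hdvd)
  exact (hmod.eq_of_lt_of_lt ha' ha).symm

theorem component_eq_setOf_dvd (s l a : ℕ) (ε : ℤ_[p]) : component s l a ε =
    {x | (p : ℤ_[p]) ^ (s + l + 2) ∣ x - basePoint l a ε} ∪
      {x | (p : ℤ_[p]) ^ (s + l + 2) ∣ x - (basePoint l a ε)⁻¹ʳ} := by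
  ext x
  simp only [component, reciprocalBalls, Set.mem_union, mem_closedBall, dist_eq_norm,
    norm_le_norm_iff_dvd, Set.mem_ofPred_eq]

theorem component_eq_of_mem (hε : IsUnit ε) (hz : z ∈ component s l a ε) :
    component s l a ε = reciprocalBalls z ‖(p : ℤ_[p]) ^ (s + l + 2)‖ :=
  (reciprocalBalls_eq_of_mem (isUnit_basePoint hε l a)
    ((PadicInt.norm_lt_one_iff_dvd _).2 (dvd_pow_self _ (s + l + 1).succ_ne_zero)) hz).symm

theorem exists_hasLeadingTerm_of_mem_component (hε : ε ^ 2 = 1) (hz : z ∈ component s l a ε) :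
    ∃ δ : ℤ_[p], δ ^ 2 = 1 ∧ HasLeadingTerm ε δ l z := by
  have hx := hasLeadingTerm_basePoint l a ε
  rcases hz with hz | hz
  · exact ⟨1, one_pow 2, hx.of_mem_closedBall hz⟩
  · exact ⟨-1, neg_one_sq, (hx.inverse hε).of_mem_closedBall hz⟩

theorem disjoint_component (hp : p ≠ 2) (hε : ε ^ 2 = 1) (hε' : ε' ^ 2 = 1) (ha : a < p ^ s)
    (ha' : a' < p ^ s) (hne : (l, a, ε) ≠ (l', a', ε')) :
    Disjoint (component s l a ε) (component s l' a' ε') := by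
  refine Set.disjoint_left.2 fun z hz hz' => hne ?_
  obtain ⟨δ, hδ, hzδ⟩ := exists_hasLeadingTerm_of_mem_component hε hz
  obtain ⟨δ', hδ', hzδ'⟩ := exists_hasLeadingTerm_of_mem_component hε' hz'
  obtain ⟨rfl, -, rfl⟩ := hzδ.unique hp hε hε' hδ hδ' hzδ'
  have hmem : basePoint l a ε ∈ component s l a' ε := by
    have hεu : IsUnit ε := .of_pow_eq_one hε two_ne_zero
    rw [component_eq_of_mem hεu hz', ← component_eq_of_mem hεu hz]
    exact Or.inl (mem_closedBall_self (norm_nonneg _))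
  rcases hmem with hmem | hmem
  · rw [eq_of_basePoint_mem_closedBall ha ha' hmem]
  · have hneg := ((hasLeadingTerm_basePoint l a' ε).inverse hε).of_mem_closedBall hmem
    have hone : (1 : ℤ_[p]) = -1 :=
      ((hasLeadingTerm_basePoint l a ε).unique hp hε hε (one_pow 2) neg_one_sq hneg).2.1
    norm_num at hone

theorem isMinimalComponent_component (hp : p ≠ 2) {m : ℕ} (hm : Odd m)
    (hs : padicValNat p (m + 1) = s + 1) (hε : ε ^ 2 = 1) (l a : ℕ) :
    IsMinimalComponent (fun z : ℤ_[p] => z ^ m) (component s l a ε) := by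
  have hx := hasLeadingTerm_basePoint l a ε
  have hpm : p ∣ m + 1 := dvd_of_one_le_padicValNat (by omega)
  have hεm : ε ^ (m + 1) = 1 := by
    obtain ⟨k, hk⟩ := hm.add_one
    rw [hk, ← two_mul, pow_mul, hε, one_pow]
  have hnorm : ‖basePoint l a ε - ε‖ = ‖(p : ℤ_[p]) ^ (l + 1)‖ := hx.norm_sub isUnit_one
  have hradius : ‖((m + 1 : ℕ) : ℤ_[p]) * (basePoint l a ε - ε)‖ =
      ‖(p : ℤ_[p]) ^ (s + l + 2)‖ := by
    rw [norm_mul, hnorm, norm_natCast_eq_norm_pow_padicValNat m.succ_ne_zero, hs, ← norm_mul]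
    ring_nf
  rw [component, ← hradius]
  refine isMinimalComponent_reciprocalBalls hp hpm hεm
    ((PadicInt.norm_lt_one_iff_dvd _).2 hx.dvd_sub) ?_
  rw [← sub_ne_zero, ← norm_ne_zero_iff, hnorm]
  exact norm_ne_zero_iff.2 (pow_ne_zero _ PadicInt.prime_p.ne_zero)

theorem HasLeadingTerm.exists_mem_component {δ : ℤ_[p]} (hz : HasLeadingTerm ε δ l z)
    (hε : ε ^ 2 = 1) (hδ : δ ^ 2 = 1) (s : ℕ) :
    ∃ a < p ^ s, z ∈ component s l a ε := by
  rcases sq_eq_one_iff.1 hδ with rfl | rfl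
  · obtain ⟨a, ha, hza⟩ := exists_mem_closedBall_basePoint hz s
    exact ⟨a, ha, Or.inl hza⟩
  · have hεu : IsUnit ε := .of_pow_eq_one hε two_ne_zero
    have hz' := hz.inverse hε
    rw [neg_neg] at hz'
    obtain ⟨a, ha, hza⟩ := exists_mem_closedBall_basePoint hz' s
    refine ⟨a, ha, ?_⟩
    rw [component_eq_of_mem hεu (Or.inl hza), reciprocalBalls_inverse (hz.isUnit hεu)]
    exact Or.inl (mem_closedBall_self (norm_nonneg _))

theorem iUnion_component_union_one_neg_one (s : ℕ) :
    (⋃ l, ⋃ a ∈ Finset.range (3 ^ s), ⋃ ε ∈ ({1, -1} : Set ℤ_[3]), component s l a ε) ∪ {1, -1} =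
      {z : ℤ_[3] | IsUnit z} := by
  ext z
  simp only [Set.mem_union, Set.mem_iUnion, Finset.mem_range, Set.mem_insert_iff,
    Set.mem_singleton_iff, exists_prop, Set.mem_ofPred_eq, ← sq_eq_one_iff]
  constructor
  · rintro (⟨l, a, -, ε, hε, hz⟩ | hz)
    · obtain ⟨δ, -, hδ⟩ := exists_hasLeadingTerm_of_mem_component hε hz
      exact hδ.isUnit (.of_pow_eq_one hε two_ne_zero)
    · exact IsUnit.of_pow_eq_one hz two_ne_zero
  · intro hz
    refine or_iff_not_imp_right.2 fun hz1 => ?_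
    obtain ⟨ε, δ, l, hε, hδ, h⟩ := exists_hasLeadingTerm hz hz1
    obtain ⟨a, ha, hza⟩ := h.exists_mem_component hε hδ s
    exact ⟨l, a, ha, ε, hε, hza⟩

end Components

end PadicMonomial

open PadicMonomial

/-- Minimal decomposition for `x ↦ x^m` on `ℤ_3` with `m ≡ 5 (mod 6)`:
with `x₀ = ε + 3^(l+1) + 3^(l+2)a` (a 3-adic unit), the sets
`M_{l,a,ε} = (x₀ + 3^(t+l+1)ℤ_3) ∪ (x₀⁻¹ + 3^(t+l+1)ℤ_3)` are pairwise disjoint clopen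
minimal components, and together with `{1, -1}` they cover exactly the 3-adic units. -/
theorem monomial_Z3_five_mod_six_decomposition (m : ℕ) (hm : 2 ≤ m) (hmod : m % 6 = 5)
    (t : ℕ) (ht : t = padicValNat 3 (m + 1))
    (x₀ : ℕ → ℕ → ℤ_[3] → ℤ_[3])
    (hx₀ : ∀ l a ε, x₀ l a ε = ε + 3 ^ (l + 1) + 3 ^ (l + 2) * (a : ℤ_[3]))
    (M : ℕ → ℕ → ℤ_[3] → Set ℤ_[3])
    (hM : ∀ l a ε, M l a ε =
      {x : ℤ_[3] | (3 : ℤ_[3]) ^ (t + l + 1) ∣ x - x₀ l a ε} ∪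
      {x : ℤ_[3] | (3 : ℤ_[3]) ^ (t + l + 1) ∣ x - Ring.inverse (x₀ l a ε)}) :
    (∀ l a (ε : ℤ_[3]), a < 3 ^ (t - 1) → (ε = 1 ∨ ε = -1) → IsUnit (x₀ l a ε)) ∧
    (∀ l a (ε : ℤ_[3]) l' a' (ε' : ℤ_[3]),
      a < 3 ^ (t - 1) → a' < 3 ^ (t - 1) → (ε = 1 ∨ ε = -1) → (ε' = 1 ∨ ε' = -1) →
      (l, a, ε) ≠ (l', a', ε') → Disjoint (M l a ε) (M l' a' ε')) ∧
    (∀ l a (ε : ℤ_[3]), a < 3 ^ (t - 1) → (ε = 1 ∨ ε = -1) →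
      IsClopen (M l a ε) ∧
      (∀ x ∈ M l a ε, x ^ m ∈ M l a ε) ∧
      (∀ x ∈ M l a ε, M l a ε ⊆ closure (Set.range fun n : ℕ => x ^ m ^ n))) ∧
    ((⋃ l : ℕ, ⋃ a ∈ Finset.range (3 ^ (t - 1)), ⋃ ε ∈ ({1, -1} : Set ℤ_[3]), M l a ε)
        ∪ {1, -1} = {x : ℤ_[3] | ¬ (3 : ℤ_[3]) ∣ x}) := by
  obtain ⟨s, rfl⟩ : ∃ s, t = s + 1 := Nat.exists_eq_succ_of_ne_zero
    (ht ▸ dvd_iff_padicValNat_ne_zero m.succ_ne_zero |>.1 (by omega))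
  have hodd : Odd m := Nat.odd_iff.2 (by omega)
  obtain rfl : x₀ = basePoint := funext fun l => funext fun a => funext (hx₀ l a)
  obtain rfl : M = component s := by
    funext l a ε
    rw [hM, component_eq_setOf_dvd, add_right_comm s 1 l, add_assoc, Nat.cast_ofNat]
  have hsq {ε : ℤ_[3]} : (ε = 1 ∨ ε = -1) → ε ^ 2 = 1 := sq_eq_one_iff.2
  have hmin (l a : ℕ) {ε : ℤ_[3]} (hε : ε = 1 ∨ ε = -1) :=
    isMinimalComponent_component (by decide) hodd ht.symm (hsq hε) l a
  refine ⟨fun l a ε _ hε => isUnit_basePoint (.of_pow_eq_one (hsq hε) two_ne_zero) l a,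
    fun l a ε l' a' ε' ha ha' hε hε' => disjoint_component (by decide) (hsq hε) (hsq hε') ha ha',
    fun l a ε _ hε => ⟨(hmin l a hε).isClopen, (hmin l a hε).mapsTo, ?_⟩, ?_⟩
  · simpa only [pow_iterate] using (hmin l a hε).subset_closure_orbit
  · simpa only [PadicInt.isUnit_iff, norm_eq_one_iff_not_dvd, Nat.cast_ofNat,
      add_tsub_cancel_right] using iUnion_component_union_one_neg_one s
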